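/- Let n ≥ 1 and d ≥ 1. Then the Frobenius distance of the diagonal matrix diag(d, 1, …, 1) to SO(n) equals d − 1, i.e. dist(diag(d, 1, …, 1), SO(n)) = d − 1, and the minimum is attained at Q = Id. -/

import Mathlib

open Matrix

/-- The Frobenius norm of a real square matrix, `|F|² = tr(Fᵀ F)`. -/
noncomputable def frob {n : ℕ} (F : Matrix (Fin n) (Fin n) ℝ) : ℝ :=
  Real.sqrt ((Fᵀ * F).trace)

/-- The special orthogonal group `SO(n)` as a set of matrices. -/
def SOn (n : ℕ) : Set (Matrix (Fin n) (Fin n) ℝ) :=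
  {Q | Qᵀ * Q = 1 ∧ Q.det = 1}

/-- The Frobenius distance of a matrix to `SO(n)`. -/
noncomputable def distSO {n : ℕ} (F : Matrix (Fin n) (Fin n) ℝ) : ℝ :=
  sInf ((fun Q => frob (F - Q)) '' SOn n)

/-!
For symmetric `F` and orthogonal `Q`, expanding the squares gives
`|F - Q|² = |F - 1|² + tr((1 - Q)ᵀ F (1 - Q))`. The last term is nonnegative as soon as `F` is
positive semidefinite, so the identity is then a closest rotation to `F`.
-/

theorem trace_transpose_mul_self_sub_of_isSymm {ι R : Type*} [Fintype ι] [DecidableEq ι]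
    [CommRing R] {F Q : Matrix ι ι R} (hF : F.IsSymm) (hQ : Qᵀ * Q = 1) :
    ((F - Q)ᵀ * (F - Q)).trace =
      ((F - 1)ᵀ * (F - 1)).trace + ((1 - Q)ᵀ * F * (1 - Q)).trace := by
  have conj_trace : (Qᵀ * F * Q).trace = F.trace := by
    rw [trace_mul_cycle, mul_eq_one_comm.mp hQ, one_mul]
  have cross_trace : (Qᵀ * F).trace = (F * Q).trace := by
    rw [← trace_transpose, transpose_mul, transpose_transpose, hF.eq]
  simp only [transpose_sub, transpose_one, hF.eq, mul_sub, sub_mul, hQ, one_mul, mul_one,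
    trace_sub, conj_trace, cross_trace]
  ring

theorem frob_sub_one_le_frob_sub {n : ℕ} {F Q : Matrix (Fin n) (Fin n) ℝ} (hF : F.PosSemidef)
    (hQ : Qᵀ * Q = 1) : frob (F - 1) ≤ frob (F - Q) := by
  have hsymm : F.IsSymm := by
    simpa only [IsSymm, conjTranspose_eq_transpose_of_trivial] using hF.isHermitian.eq
  have hnonneg : 0 ≤ ((1 - Q)ᵀ * F * (1 - Q)).trace := by
    simpa only [conjTranspose_eq_transpose_of_trivial] using
      (hF.conjTranspose_mul_mul_same (1 - Q)).trace_nonneg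
  apply Real.sqrt_le_sqrt
  rw [trace_transpose_mul_self_sub_of_isSymm hsymm hQ]
  exact le_add_of_nonneg_right hnonneg

theorem one_mem_SOn (n : ℕ) : 1 ∈ SOn n := by
  simp [SOn]

theorem distSO_eq_frob_sub_one_of_posSemidef {n : ℕ} {F : Matrix (Fin n) (Fin n) ℝ}
    (hF : F.PosSemidef) : distSO F = frob (F - 1) := by
  refine IsLeast.csInf_eq ⟨Set.mem_image_of_mem _ (one_mem_SOn n), ?_⟩
  rintro _ ⟨Q, ⟨hQ, -⟩, rfl⟩
  exact frob_sub_one_le_frob_sub hF hQ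

theorem frob_diagonal {n : ℕ} (w : Fin n → ℝ) : frob (diagonal w) = √(∑ i, w i ^ 2) := by
  simp [frob, sq]

theorem sum_sq_ite_val_eq_zero_sub_one {n : ℕ} (hn : 1 ≤ n) {R : Type*} [Ring R] (d : R) :
    ∑ i : Fin n, ((if (i : ℕ) = 0 then d else 1) - 1) ^ 2 = (d - 1) ^ 2 := by
  obtain ⟨m, rfl⟩ := Nat.exists_eq_add_of_le' hn
  simp [Fin.sum_univ_succ]

theorem dist_SOn_diagonal_general {n : ℕ} {w : Fin n → ℝ} (hw : 0 ≤ w) :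
    distSO (diagonal w) = √(∑ i, (w i - 1) ^ 2) ∧
      frob (diagonal w - 1) = distSO (diagonal w) := by
  have hdist := distSO_eq_frob_sub_one_of_posSemidef (PosSemidef.diagonal hw)
  refine ⟨?_, hdist.symm⟩
  rw [hdist, ← diagonal_one, diagonal_sub, frob_diagonal]

theorem dist_SOn_diagonal {n : ℕ} (hn : 1 ≤ n) (d : ℝ) (hd : 1 ≤ d) :
    distSO (Matrix.diagonal (fun i : Fin n => if (i : ℕ) = 0 then d else 1)) = d - 1 ∧
    frob (Matrix.diagonal (fun i : Fin n => if (i : ℕ) = 0 then d else 1) - 1) =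
      distSO (Matrix.diagonal (fun i : Fin n => if (i : ℕ) = 0 then d else 1)) := by
  have hw : 0 ≤ fun i : Fin n => if (i : ℕ) = 0 then d else 1 := fun i =>
    ite_nonneg (zero_le_one.trans hd) zero_le_one
  simpa [sum_sq_ite_val_eq_zero_sub_one hn, Real.sqrt_sq (sub_nonneg.mpr hd)] using
    dist_SOn_diagonal_general hw
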